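/- (Deterministic core of the sketched least squares guarantee.) Let $P \in \mathbb{R}^{N \times s}$ have full column rank with reduced QR decomposition $P = Q_P R_P$ ($Q_P^{\top} Q_P = I_s$, $R_P$ upper triangular and invertible), let $B \in \mathbb{R}^{N \times n}$, let $X_{opt} = \arg\min_X \|PX - B\|_F$ and $B^{\perp} = P X_{opt} - B$. Let $S \in \mathbb{R}^{m \times N}$ be any matrix satisfying $\|Q_P^{\top} S^{\top} S B^{\perp}\|_F^2 \le \frac{\epsilon}{4}\|B^{\perp}\|_F^2$ and $\|Q_P^{\top} S^{\top} S Q_P - I_s\|_F^2 \le \frac{1}{4}$, and let $\tilde{X}_{opt}$ be any minimizer of $\|SPX - SB\|_F$. Then $\|P\tilde{X}_{opt} - P X_{opt}\|_F^2 \le \epsilon \|B^{\perp}\|_F^2$, and consequently $\|P\tilde{X}_{opt} - B\|_F^2 \le (1+\epsilon)\|B^{\perp}\|_F^2$. -/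

import Mathlib

/-!
Write `D = P Xopt - B` and `P (Xt - Xopt) = Q Y` with `Y = R (Xt - Xopt)`. The sketched residual
`S (Q Y + D)` is orthogonal to `S Q Y`, that is, `Y` is orthogonal to `M Y + W`, where
`M = Qᵀ Sᵀ S Q` and `W = Qᵀ Sᵀ S D`. By Pythagoras `Y` is then no larger than
`M Y + W - Y = (M - 1) Y + W`, and since `M - 1` has norm at most `1 / 2`, half of `Y` is absorbed
and `‖Y‖ ≤ 2 ‖W‖`. The bound on `P Xt - B = Q Y + D` follows because `D` is orthogonal to the range
of `P`.
-/

open Matrix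

/-- The squared Frobenius norm of a real matrix. -/
def frobSq {α β : Type*} [Fintype α] [Fintype β] (A : Matrix α β ℝ) : ℝ :=
  ∑ i, ∑ j, A i j ^ 2

section Frobenius

open scoped Matrix.Norms.Frobenius

variable {α β γ : Type*} [Fintype α] [Fintype β] [Fintype γ]

lemma frobSq_eq_norm_sq (A : Matrix α β ℝ) : frobSq A = ‖A‖ ^ 2 := by
  have hnonneg : 0 ≤ ∑ i, ∑ j, A i j ^ 2 := by positivity
  simp only [frobSq, frobenius_norm_def, Real.norm_eq_abs, Real.rpow_two, sq_abs,
    ← Real.sqrt_eq_rpow, Real.sq_sqrt hnonneg]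

lemma frobSq_nonneg (A : Matrix α β ℝ) : 0 ≤ frobSq A := by
  rw [frobSq_eq_norm_sq]
  positivity

lemma frobSq_smul (t : ℝ) (A : Matrix α β ℝ) : frobSq (t • A) = t ^ 2 * frobSq A := by
  simp only [frobSq_eq_norm_sq, norm_smul, mul_pow, Real.norm_eq_abs, sq_abs]

lemma frobSq_mul_le (A : Matrix α β ℝ) (B : Matrix β γ ℝ) :
    frobSq (A * B) ≤ frobSq A * frobSq B := by
  simp only [frobSq_eq_norm_sq, ← mul_pow]
  gcongr
  exact frobenius_norm_mul A B

lemma frobSq_add_le (A B : Matrix α β ℝ) : frobSq (A + B) ≤ 2 * (frobSq A + frobSq B) := by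
  simp only [frobSq_eq_norm_sq]
  calc ‖A + B‖ ^ 2 ≤ (‖A‖ + ‖B‖) ^ 2 := by gcongr; exact norm_add_le A B
    _ ≤ 2 * (‖A‖ ^ 2 + ‖B‖ ^ 2) := add_sq_le

lemma frobSq_eq_trace (A : Matrix α β ℝ) : frobSq A = (Aᵀ * A).trace := by
  simp only [frobSq, trace, diag_apply, mul_apply, transpose_apply, ← sq]
  exact Finset.sum_comm

lemma frobSq_add (A B : Matrix α β ℝ) :
    frobSq (A + B) = frobSq A + 2 * (Aᵀ * B).trace + frobSq B := by
  have hsymm : (Bᵀ * A).trace = (Aᵀ * B).trace := by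
    rw [← trace_transpose, transpose_mul, transpose_transpose]
  simp only [frobSq_eq_trace, transpose_add, Matrix.add_mul, Matrix.mul_add, trace_add, hsymm]
  ring

lemma frobSq_mul_of_transpose_mul_self_eq_one [DecidableEq β] {Q : Matrix α β ℝ}
    (hQ : Qᵀ * Q = 1) (A : Matrix β γ ℝ) : frobSq (Q * A) = frobSq A := by
  rw [frobSq_eq_trace, frobSq_eq_trace, transpose_mul, Matrix.mul_assoc, ← Matrix.mul_assoc Qᵀ,
    hQ, Matrix.one_mul]

lemma frobSq_le_frobSq_sub_of_trace_eq_zero {A B : Matrix α β ℝ} (h : (Aᵀ * B).trace = 0) :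
    frobSq A ≤ frobSq (B - A) := by
  have hpyth : frobSq (B - A) = frobSq A + frobSq B := by
    rw [← neg_add_eq_sub, frobSq_add, transpose_neg, Matrix.neg_mul, trace_neg, h, ← neg_one_smul ℝ,
      frobSq_smul]
    ring
  linarith [frobSq_nonneg B]

lemma one_sub_two_mul_frobSq_mul_le_of_trace_eq_zero [DecidableEq α] {M : Matrix α α ℝ}
    {Y W : Matrix α β ℝ} (h : (Yᵀ * (M * Y + W)).trace = 0) :
    (1 - 2 * frobSq (M - 1)) * frobSq Y ≤ 2 * frobSq W := by
  have hY : frobSq Y ≤ 2 * (frobSq (M - 1) * frobSq Y + frobSq W) :=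
    calc frobSq Y ≤ frobSq (M * Y + W - Y) := frobSq_le_frobSq_sub_of_trace_eq_zero h
      _ = frobSq ((M - 1) * Y + W) := by
        rw [Matrix.sub_mul, Matrix.one_mul, add_sub_right_comm]
      _ ≤ 2 * (frobSq ((M - 1) * Y) + frobSq W) := frobSq_add_le _ _
      _ ≤ 2 * (frobSq (M - 1) * frobSq Y + frobSq W) := by gcongr; exact frobSq_mul_le _ _
  linarith

end Frobenius

section LeastSquares

variable {ι κ ρ ν μ : Type*} [Fintype ι] [Fintype κ] [Fintype ρ] [Fintype ν] [Fintype μ]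

/-- `X` is a least squares solution of `A X = B` for matrix right-hand sides `B`: it minimizes the
Frobenius norm of the residual. No rank condition is imposed, so `X` need not be unique. -/
def IsLeastSquaresSolution (A : Matrix ι κ ℝ) (B : Matrix ι ν ℝ) (X : Matrix κ ν ℝ) : Prop :=
  ∀ Z : Matrix κ ν ℝ, frobSq (A * X - B) ≤ frobSq (A * Z - B)

namespace IsLeastSquaresSolution

variable {A : Matrix ι κ ℝ} {B : Matrix ι ν ℝ} {X : Matrix κ ν ℝ}

lemma trace_transpose_mul_residual_eq_zero (h : IsLeastSquaresSolution A B X)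
    (Z : Matrix κ ν ℝ) : ((A * Z)ᵀ * (A * X - B)).trace = 0 := by
  set c := ((A * Z)ᵀ * (A * X - B)).trace
  have hquad (t : ℝ) : 0 ≤ frobSq (A * Z) * (t * t) + 2 * c * t + 0 := by
    have hexpand : frobSq (A * (X + t • Z) - B) =
        t ^ 2 * frobSq (A * Z) + 2 * (t * c) + frobSq (A * X - B) := by
      rw [Matrix.mul_add, Matrix.mul_smul, add_comm, add_sub_assoc, frobSq_add, frobSq_smul,
        transpose_smul, Matrix.smul_mul, trace_smul, smul_eq_mul]
    linarith [h (X + t • Z)]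
  have hdiscrim : (2 * c) ^ 2 ≤ 0 := by simpa [discrim] using discrim_le_zero hquad
  nlinarith

lemma frobSq_residual (h : IsLeastSquaresSolution A B X) (Z : Matrix κ ν ℝ) :
    frobSq (A * Z - B) = frobSq (A * Z - A * X) + frobSq (A * X - B) := by
  rw [← sub_add_sub_cancel (A * Z) (A * X) B, frobSq_add, ← Matrix.mul_sub,
    h.trace_transpose_mul_residual_eq_zero, mul_zero, add_zero]

end IsLeastSquaresSolution

lemma trace_transpose_mul_sketched_residual_eq_zero {P : Matrix ι κ ℝ} {Q : Matrix ι ρ ℝ}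
    {R : Matrix ρ κ ℝ} (hPQR : P = Q * R) {S : Matrix μ ι ℝ} {B : Matrix ι ν ℝ}
    {Xt : Matrix κ ν ℝ} (hXt : IsLeastSquaresSolution (S * P) (S * B) Xt) (X : Matrix κ ν ℝ) :
    ((R * (Xt - X))ᵀ *
      (Qᵀ * Sᵀ * S * Q * (R * (Xt - X)) + Qᵀ * Sᵀ * S * (P * X - B))).trace = 0 := by
  set Y := R * (Xt - X) with hY
  have hQY : Q * Y = P * (Xt - X) := by rw [hY, hPQR, Matrix.mul_assoc]
  have hresidual : S * P * Xt - S * B = S * (Q * Y + (P * X - B)) := by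
    rw [hQY, Matrix.mul_sub, sub_add_sub_cancel, Matrix.mul_sub, Matrix.mul_assoc]
  have horth := hXt.trace_transpose_mul_residual_eq_zero (Xt - X)
  rw [hresidual, Matrix.mul_assoc, ← hQY] at horth
  simpa only [transpose_mul, Matrix.mul_add, Matrix.mul_assoc] using horth

theorem sketched_least_squares_deterministic_general [DecidableEq ρ]
    {P : Matrix ι κ ℝ} {Q : Matrix ι ρ ℝ} {R : Matrix ρ κ ℝ} (hPQR : P = Q * R) (hQ : Qᵀ * Q = 1)
    {B : Matrix ι ν ℝ} {Xopt : Matrix κ ν ℝ} (hXopt : IsLeastSquaresSolution P B Xopt)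
    {S : Matrix μ ι ℝ} {ε : ℝ}
    (hresidual : frobSq (Qᵀ * Sᵀ * S * (P * Xopt - B)) ≤ ε / 4 * frobSq (P * Xopt - B))
    (hembed : frobSq (Qᵀ * Sᵀ * S * Q - 1) ≤ 1 / 4)
    {Xt : Matrix κ ν ℝ} (hXt : IsLeastSquaresSolution (S * P) (S * B) Xt) :
    frobSq (P * Xt - P * Xopt) ≤ ε * frobSq (P * Xopt - B) ∧
    frobSq (P * Xt - B) ≤ (1 + ε) * frobSq (P * Xopt - B) := by
  set Y := R * (Xt - Xopt)
  have hdiff : frobSq (P * Xt - P * Xopt) = frobSq Y := by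
    rw [← Matrix.mul_sub, hPQR, Matrix.mul_assoc, frobSq_mul_of_transpose_mul_self_eq_one hQ]
  have habsorb : (1 - 2 * frobSq (Qᵀ * Sᵀ * S * Q - 1)) * frobSq Y ≤
      2 * frobSq (Qᵀ * Sᵀ * S * (P * Xopt - B)) :=
    one_sub_two_mul_frobSq_mul_le_of_trace_eq_zero
      (trace_transpose_mul_sketched_residual_eq_zero hPQR hXt Xopt)
  have hhalf : 1 / 2 * frobSq Y ≤ (1 - 2 * frobSq (Qᵀ * Sᵀ * S * Q - 1)) * frobSq Y :=
    mul_le_mul_of_nonneg_right (by linarith) (frobSq_nonneg Y)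
  have hbound : frobSq (P * Xt - P * Xopt) ≤ ε * frobSq (P * Xopt - B) := by linarith
  exact ⟨hbound, by linarith [hXopt.frobSq_residual Xt]⟩

end LeastSquares

/-- deterministic core of the sketched least squares guarantee: let
`P ∈ ℝ^{N×s}` have full column rank with reduced QR decomposition `P = Q R`
(`Qᵀ Q = I`, `R` upper triangular and invertible), `B ∈ ℝ^{N×n}`, `X_opt` a minimizer of
`‖PX - B‖_F` and `B^⊥ = P X_opt - B`.  If `S ∈ ℝ^{m×N}` satisfies
`‖Qᵀ Sᵀ S B^⊥‖_F² ≤ (ε/4)‖B^⊥‖_F²` and `‖Qᵀ Sᵀ S Q - I‖_F² ≤ 1/4`, then any minimizer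
`X̃_opt` of `‖SPX - SB‖_F` satisfies `‖P X̃_opt - P X_opt‖_F² ≤ ε ‖B^⊥‖_F²`, hence
`‖P X̃_opt - B‖_F² ≤ (1+ε)‖B^⊥‖_F²`. -/
theorem sketched_least_squares_deterministic
    {N s n m : ℕ}
    (P Q : Matrix (Fin N) (Fin s) ℝ) (R : Matrix (Fin s) (Fin s) ℝ)
    (hrank : P.rank = s)
    (hQR : P = Q * R) (hQ : Qᵀ * Q = 1)
    (hRtri : R.BlockTriangular id) (hRunit : IsUnit R.det)
    (B : Matrix (Fin N) (Fin n) ℝ)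
    (Xopt : Matrix (Fin s) (Fin n) ℝ)
    (hXopt : ∀ X, frobSq (P * Xopt - B) ≤ frobSq (P * X - B))
    (S : Matrix (Fin m) (Fin N) ℝ) (ε : ℝ)
    (h1 : frobSq (Qᵀ * Sᵀ * S * (P * Xopt - B)) ≤ ε / 4 * frobSq (P * Xopt - B))
    (h2 : frobSq (Qᵀ * Sᵀ * S * Q - 1) ≤ 1 / 4)
    (Xt : Matrix (Fin s) (Fin n) ℝ)
    (hXt : ∀ X, frobSq (S * P * Xt - S * B) ≤ frobSq (S * P * X - S * B)) :
    frobSq (P * Xt - P * Xopt) ≤ ε * frobSq (P * Xopt - B) ∧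
    frobSq (P * Xt - B) ≤ (1 + ε) * frobSq (P * Xopt - B) :=
  sketched_least_squares_deterministic_general hQR hQ hXopt h1 h2 hXt
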